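/- Let d ≥ 3 and let Ψ be a random vector with the uniform distribution on the sphere of radius √d centered at the origin in ℝ^d. Then there exists an absolute constant C > 0 such that for all unit vectors u, v ∈ ℝ^d: C^{-1}·‖u − v‖² ≤ E[|u'Ψ|·1(sgn(u'Ψ) ≠ sgn(v'Ψ))] ≤ √2·‖u − v‖². -/

import Mathlib

open MeasureTheory Matrix

noncomputable section

/-- The Euclidean norm of a vector in `Fin d → ℝ`. -/
def eNorm {d : ℕ} (x : Fin d → ℝ) : ℝ := Real.sqrt (∑ i, x i ^ 2)

/-- `F` is the uniform (rotation-invariant) probability distribution on the sphere of radius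
`√d` centered at the origin in `ℝ^d`. -/
def IsUniformOnSphere (d : ℕ) (F : Measure (Fin d → ℝ)) : Prop :=
  IsProbabilityMeasure F ∧
    F {x | ∑ i, x i ^ 2 = (d : ℝ)} = 1 ∧
    ∀ O : Matrix (Fin d) (Fin d) ℝ, Oᵀ * O = 1 → F.map (fun x => O *ᵥ x) = F


/-- Householder reflection (the identity when `w = 0`). -/
def hh {d : ℕ} (w : Fin d → ℝ) : Matrix (Fin d) (Fin d) ℝ :=
  1 - (2 / (w ⬝ᵥ w)) • vecMulVec w w

lemma hh_transpose {d : ℕ} (w : Fin d → ℝ) : (hh w)ᵀ = hh w := by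
  ext i j
  simp [hh, vecMulVec_apply, Matrix.one_apply, eq_comm, mul_comm]

lemma hh_mulVec {d : ℕ} (w x : Fin d → ℝ) :
    hh w *ᵥ x = x - (2 / (w ⬝ᵥ w) * (w ⬝ᵥ x)) • w := by
  ext i
  simp [hh, Matrix.sub_mulVec, Matrix.smul_mulVec, vecMulVec_mulVec]
  ring

lemma hh_orth {d : ℕ} (w : Fin d → ℝ) : (hh w)ᵀ * hh w = 1 := by
  rw [hh_transpose]
  apply Matrix.toLin'.injective
  ext1 i
  ext1
  simp only [Matrix.toLin'_mul, LinearMap.comp_apply, Matrix.toLin'_apply, Matrix.one_mulVec]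
  generalize (LinearMap.single ℝ (fun _ => ℝ) i) 1 = x
  rw [hh_mulVec, hh_mulVec, dotProduct_sub, dotProduct_smul]
  by_cases h : w ⬝ᵥ w = 0
  · simp [h]
  · rw [sub_sub, ← add_smul]
    have : 2 / (w ⬝ᵥ w) * (w ⬝ᵥ x) + 2 / (w ⬝ᵥ w) * (w ⬝ᵥ x - (2 / (w ⬝ᵥ w) * (w ⬝ᵥ x)) • (w ⬝ᵥ w)) = 0 := by
      simp only [smul_eq_mul]
      field_simp
      ring
    rw [this]; simp

lemma dot_hh {d : ℕ} (u w x : Fin d → ℝ) :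
    u ⬝ᵥ (hh w *ᵥ x) = u ⬝ᵥ x - 2 / (w ⬝ᵥ w) * (w ⬝ᵥ x) * (u ⬝ᵥ w) := by
  rw [hh_mulVec, dotProduct_sub, dotProduct_smul, smul_eq_mul]

lemma meas_dot {d : ℕ} (u : Fin d → ℝ) : Measurable (fun x : Fin d → ℝ => u ⬝ᵥ x) := by
  unfold dotProduct
  fun_prop

lemma meas_sign : Measurable Real.sign := by
  unfold Real.sign
  exact Measurable.ite measurableSet_Iio measurable_const
    (Measurable.ite measurableSet_Ioi measurable_const measurable_const)

lemma abs_sign_le (r : ℝ) : |Real.sign r| ≤ 1 := by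
  rcases Real.sign_apply_eq r with h | h | h <;> simp [h]

lemma inv_hh {d : ℕ} {F : Measure (Fin d → ℝ)} (hF : IsUniformOnSphere d F) (w : Fin d → ℝ)
    (g : (Fin d → ℝ) → ℝ) (hg : Measurable g) :
    ∫ x, g (hh w *ᵥ x) ∂F = ∫ x, g x ∂F := by
  conv_rhs => rw [← hF.2.2 (hh w) (hh_orth w)]
  rw [integral_map _ hg.aestronglyMeasurable]
  apply Measurable.aemeasurable
  exact measurable_pi_lambda _ fun i => meas_dot _

lemma ae_sphere {d : ℕ} {F : Measure (Fin d → ℝ)} (hF : IsUniformOnSphere d F) :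
    ∀ᵐ x ∂F, x ⬝ᵥ x = (d : ℝ) := by
  have := hF.1
  have hm : MeasurableSet {x : Fin d → ℝ | ∑ i, x i ^ 2 = (d : ℝ)} :=
    measurableSet_eq_fun (by fun_prop) measurable_const
  have := (mem_ae_iff_prob_eq_one hm).2 hF.2.1
  filter_upwards [this] with x hx
  simpa [dotProduct, sq] using hx

lemma abs_dot_le {d : ℕ} (u x : Fin d → ℝ) (hx : x ⬝ᵥ x = (d : ℝ)) :
    |u ⬝ᵥ x| ≤ Real.sqrt ((u ⬝ᵥ u) * d) := by
  apply Real.abs_le_sqrt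
  have := Finset.sum_mul_sq_le_sq_mul_sq Finset.univ u x
  rw [← hx]
  simpa [dotProduct, sq] using this

lemma integrable_of {d : ℕ} {F : Measure (Fin d → ℝ)} (hF : IsUniformOnSphere d F)
    (g : (Fin d → ℝ) → ℝ) (hg : Measurable g) (K : ℝ)
    (hK : ∀ x : Fin d → ℝ, x ⬝ᵥ x = (d : ℝ) → |g x| ≤ K) : Integrable g F := by
  have := hF.1
  refine Integrable.of_bound hg.aestronglyMeasurable K ?_
  filter_upwards [ae_sphere hF] with x hx
  exact hK x hx

lemma integrable_pp {d : ℕ} {F : Measure (Fin d → ℝ)} (hF : IsUniformOnSphere d F)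
    (u v : Fin d → ℝ) (m n : ℕ) : Integrable (fun x => (u ⬝ᵥ x) ^ m * (v ⬝ᵥ x) ^ n) F := by
  refine integrable_of hF _ (((meas_dot u).pow_const m).mul ((meas_dot v).pow_const n))
    (Real.sqrt ((u ⬝ᵥ u) * d) ^ m * Real.sqrt ((v ⬝ᵥ v) * d) ^ n) ?_
  intro x hx
  rw [abs_mul, abs_pow, abs_pow]
  have h1 := abs_dot_le u x hx
  have h2 := abs_dot_le v x hx
  gcongr

lemma integrable_p {d : ℕ} {F : Measure (Fin d → ℝ)} (hF : IsUniformOnSphere d F)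
    (u : Fin d → ℝ) (m : ℕ) : Integrable (fun x => (u ⬝ᵥ x) ^ m) F := by
  simpa using integrable_pp hF u u m 0

lemma integrable_s {d : ℕ} {F : Measure (Fin d → ℝ)} (hF : IsUniformOnSphere d F)
    (u v : Fin d → ℝ) : Integrable (fun x => (u ⬝ᵥ x) * Real.sign (v ⬝ᵥ x)) F := by
  refine integrable_of hF _ ((meas_dot u).mul (meas_sign.comp (meas_dot v)))
    (Real.sqrt ((u ⬝ᵥ u) * d) * 1) ?_
  intro x hx
  rw [abs_mul]
  have h1 := abs_dot_le u x hx
  have h2 := abs_sign_le (v ⬝ᵥ x)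
  gcongr

lemma integrable_a {d : ℕ} {F : Measure (Fin d → ℝ)} (hF : IsUniformOnSphere d F)
    (u : Fin d → ℝ) : Integrable (fun x => |u ⬝ᵥ x|) F := by
  simpa using (integrable_p hF u 1).abs

lemma same_law {d : ℕ} {F : Measure (Fin d → ℝ)} (hF : IsUniformOnSphere d F)
    (u v : Fin d → ℝ) (huv : u ⬝ᵥ u = v ⬝ᵥ v) (g : ℝ → ℝ) (hg : Measurable g) :
    ∫ x, g (u ⬝ᵥ x) ∂F = ∫ x, g (v ⬝ᵥ x) ∂F := by
  rw [← inv_hh hF (u - v) (fun x => g (u ⬝ᵥ x)) (hg.comp (meas_dot u))]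
  congr 1
  ext x
  congr 1
  rw [dot_hh]
  by_cases h : (u - v) ⬝ᵥ (u - v) = 0
  · have := dotProduct_self_eq_zero.1 h
    rw [sub_eq_zero.1 this]; simp
  · have h2 : u ⬝ᵥ (u - v) = (u - v) ⬝ᵥ (u - v) / 2 := by
      simp only [dotProduct_sub, sub_dotProduct, dotProduct_comm v u]
      linarith
    rw [h2]
    have : 2 / ((u - v) ⬝ᵥ (u - v)) * ((u - v) ⬝ᵥ x) * ((u - v) ⬝ᵥ (u - v) / 2) = (u - v) ⬝ᵥ x := by
      field_simp
    rw [this, sub_dotProduct]; ring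

lemma sign_int {d : ℕ} {F : Measure (Fin d → ℝ)} (hF : IsUniformOnSphere d F)
    (u v : Fin d → ℝ) (hv : v ⬝ᵥ v = 1) :
    ∫ x, (u ⬝ᵥ x) * Real.sign (v ⬝ᵥ x) ∂F = (u ⬝ᵥ v) * ∫ x, |v ⬝ᵥ x| ∂F := by
  have key := inv_hh hF (u - (u ⬝ᵥ v) • v) (fun x => (u ⬝ᵥ x) * Real.sign (v ⬝ᵥ x))
    ((meas_dot u).mul (meas_sign.comp (meas_dot v)))
  have hpt : ∀ x, (u ⬝ᵥ (hh (u - (u ⬝ᵥ v) • v) *ᵥ x)) *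
      Real.sign (v ⬝ᵥ (hh (u - (u ⬝ᵥ v) • v) *ᵥ x)) =
      2 * (u ⬝ᵥ v) * |v ⬝ᵥ x| - (u ⬝ᵥ x) * Real.sign (v ⬝ᵥ x) := by
    intro x
    have hvw : v ⬝ᵥ (u - (u ⬝ᵥ v) • v) = 0 := by
      simp [dotProduct_sub, hv, dotProduct_comm v u]
    have h1 : v ⬝ᵥ (hh (u - (u ⬝ᵥ v) • v) *ᵥ x) = v ⬝ᵥ x := by
      rw [dot_hh, hvw]; ring
    have h2 : u ⬝ᵥ (hh (u - (u ⬝ᵥ v) • v) *ᵥ x) = 2 * (u ⬝ᵥ v) * (v ⬝ᵥ x) - u ⬝ᵥ x := by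
      rw [dot_hh]
      have h3 : u ⬝ᵥ (u - (u ⬝ᵥ v) • v) = (u - (u ⬝ᵥ v) • v) ⬝ᵥ (u - (u ⬝ᵥ v) • v) := by
        conv_rhs => rw [sub_dotProduct, smul_dotProduct, hvw]
        simp
      rw [h3]
      have hx : (u - (u ⬝ᵥ v) • v) ⬝ᵥ x = u ⬝ᵥ x - (u ⬝ᵥ v) * (v ⬝ᵥ x) := by
        simp [sub_dotProduct]
      by_cases h : (u - (u ⬝ᵥ v) • v) ⬝ᵥ (u - (u ⬝ᵥ v) • v) = 0
      · have h0 := dotProduct_self_eq_zero.1 h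
        rw [h0, zero_dotProduct] at hx
        rw [h]
        linarith
      · rw [hx]
        field_simp
        ring
    rw [h1, h2]
    have : (v ⬝ᵥ x) * Real.sign (v ⬝ᵥ x) = |v ⬝ᵥ x| := by
      rcases lt_trichotomy (v ⬝ᵥ x) 0 with h | h | h
      · rw [Real.sign_of_neg h, abs_of_neg h]; ring
      · simp [h]
      · rw [Real.sign_of_pos h, abs_of_pos h]; ring
    rw [← this]; ring
  simp only [hpt] at key
  rw [integral_sub ((integrable_a hF v).const_mul _) (integrable_s hF u v),
    integral_const_mul] at key
  linarith

lemma second {d : ℕ} (hd : 3 ≤ d) {F : Measure (Fin d → ℝ)} (hF : IsUniformOnSphere d F)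
    (u : Fin d → ℝ) (hu : u ⬝ᵥ u = 1) : ∫ x, (u ⬝ᵥ x) ^ 2 ∂F = 1 := by
  have := hF.1
  have h1 : ∀ i : Fin d, ∫ x, (Pi.single i (1 : ℝ) ⬝ᵥ x) ^ 2 ∂F = ∫ x, (u ⬝ᵥ x) ^ 2 ∂F :=
    fun i => same_law hF _ _ (by simp [hu]) (fun t => t ^ 2) (by fun_prop)
  have h2 : ∑ i : Fin d, ∫ x, (Pi.single i (1 : ℝ) ⬝ᵥ x) ^ 2 ∂F = d := by
    rw [← integral_finsetSum _ (fun i _ => integrable_p hF _ 2)]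
    have : ∀ᵐ x ∂F, ∑ i : Fin d, (Pi.single i (1 : ℝ) ⬝ᵥ x) ^ 2 = (d : ℝ) := by
      filter_upwards [ae_sphere hF] with x hx
      rw [← hx]
      simp [dotProduct, Pi.single_apply, sq]
    rw [integral_congr_ae this]; simp
  simp only [h1] at h2
  simp only [Finset.sum_const, Finset.card_univ, Fintype.card_fin, nsmul_eq_mul] at h2
  have hd0 : (d : ℝ) ≠ 0 := by
    have : d ≠ 0 := by omega
    exact_mod_cast this
  exact mul_left_cancel₀ hd0 (by rw [h2, mul_one])

lemma fourth {d : ℕ} (hd : 3 ≤ d) {F : Measure (Fin d → ℝ)} (hF : IsUniformOnSphere d F)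
    (u : Fin d → ℝ) (hu : u ⬝ᵥ u = 1) : ∫ x, (u ⬝ᵥ x) ^ 4 ∂F ≤ 3 := by
  have := hF.1
  set M := ∫ x, (u ⬝ᵥ x) ^ 4 ∂F with hM
  have h1 : ∀ i : Fin d, ∫ x, (Pi.single i (1 : ℝ) ⬝ᵥ x) ^ 4 ∂F = M :=
    fun i => same_law hF _ _ (by simp [hu]) (fun t => t ^ 4) (by fun_prop)
  have hM0 : 0 ≤ M := integral_nonneg fun x => by positivity
  have hs : ∀ w : Fin d → ℝ, w ⬝ᵥ w = 2 → ∫ x, (w ⬝ᵥ x) ^ 4 ∂F = 4 * M := by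
    intro w hw
    rw [same_law hF w (Real.sqrt 2 • u) (by simp [hw, hu]) (fun t => t ^ 4) (by fun_prop),
      hM, ← integral_const_mul]
    congr 1
    ext x
    have : Real.sqrt 2 ^ 4 = 4 := by
      rw [show (4 : ℕ) = 2 * 2 from rfl, pow_mul, Real.sq_sqrt (by norm_num)]; norm_num
    rw [smul_dotProduct, smul_eq_mul, mul_pow, this]
  have h2 : ∀ i j : Fin d, i ≠ j →
      ∫ x, (Pi.single i (1 : ℝ) ⬝ᵥ x) ^ 2 * (Pi.single j (1 : ℝ) ⬝ᵥ x) ^ 2 ∂F = M / 3 := by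
    intro i j hij
    have ha := hs (Pi.single i 1 + Pi.single j 1) (by
      simp [hij, hij.symm]; norm_num)
    have hb := hs (Pi.single i 1 - Pi.single j 1) (by
      simp [hij, hij.symm]; norm_num)
    have hc : ∫ x, (((Pi.single i 1 + Pi.single j 1 : Fin d → ℝ) ⬝ᵥ x) ^ 4 +
        ((Pi.single i 1 - Pi.single j 1 : Fin d → ℝ) ⬝ᵥ x) ^ 4) ∂F =
        ∫ x, ((2 * (Pi.single i (1 : ℝ) ⬝ᵥ x) ^ 4 + 2 * (Pi.single j (1 : ℝ) ⬝ᵥ x) ^ 4) +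
          12 * ((Pi.single i (1 : ℝ) ⬝ᵥ x) ^ 2 * (Pi.single j (1 : ℝ) ⬝ᵥ x) ^ 2)) ∂F := by
      congr 1
      ext x
      rw [add_dotProduct, sub_dotProduct]; ring
    rw [integral_add (integrable_p hF _ 4) (integrable_p hF _ 4), ha, hb,
      integral_add (f := fun x => 2 * (Pi.single i (1 : ℝ) ⬝ᵥ x) ^ 4 +
        2 * (Pi.single j (1 : ℝ) ⬝ᵥ x) ^ 4)
        (((integrable_p hF _ 4).const_mul _).add ((integrable_p hF _ 4).const_mul _))
        ((integrable_pp hF _ _ 2 2).const_mul _),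
      integral_add ((integrable_p hF _ 4).const_mul _) ((integrable_p hF _ 4).const_mul _),
      integral_const_mul, integral_const_mul, integral_const_mul, h1, h1] at hc
    linarith
  have i0 : Fin d := ⟨0, by omega⟩
  have h3 : ∑ j : Fin d, ∫ x, (Pi.single i0 (1 : ℝ) ⬝ᵥ x) ^ 2 *
      (Pi.single j (1 : ℝ) ⬝ᵥ x) ^ 2 ∂F = d := by
    rw [← integral_finsetSum _ (fun i _ => integrable_pp hF _ _ 2 2)]
    have : ∀ᵐ x ∂F, ∑ i : Fin d, (Pi.single i0 (1 : ℝ) ⬝ᵥ x) ^ 2 *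
        (Pi.single i (1 : ℝ) ⬝ᵥ x) ^ 2 = (d : ℝ) * (Pi.single i0 (1 : ℝ) ⬝ᵥ x) ^ 2 := by
      filter_upwards [ae_sphere hF] with x hx
      rw [← hx, ← Finset.mul_sum, mul_comm]
      congr 1
      simp [dotProduct, Pi.single_apply, sq]
    rw [integral_congr_ae this, integral_const_mul, second hd hF _ (by simp)]; simp
  rw [← Finset.add_sum_erase _ _ (Finset.mem_univ i0)] at h3
  rw [Finset.sum_congr rfl (fun j hj => h2 i0 j (Finset.ne_of_mem_erase hj).symm)] at h3
  simp only [← pow_add] at h3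
  rw [h1 i0] at h3
  simp only [Finset.sum_const, Finset.card_erase_of_mem (Finset.mem_univ i0), Finset.card_univ,
    Fintype.card_fin, nsmul_eq_mul] at h3
  rw [Nat.cast_sub (by omega)] at h3
  have hd3 : (3 : ℝ) ≤ d := by exact_mod_cast hd
  push_cast at h3
  by_contra hcon
  push Not at hcon
  nlinarith

lemma first_lower {d : ℕ} (hd : 3 ≤ d) {F : Measure (Fin d → ℝ)} (hF : IsUniformOnSphere d F)
    (u : Fin d → ℝ) (hu : u ⬝ᵥ u = 1) : 9 / 16 ≤ ∫ x, |u ⬝ᵥ x| ∂F := by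
  have h : ∫ x, (3 / 4 * (u ⬝ᵥ x) ^ 2 - 1 / 16 * (u ⬝ᵥ x) ^ 4) ∂F ≤ ∫ x, |u ⬝ᵥ x| ∂F := by
    refine integral_mono (((integrable_p hF _ 2).const_mul _).sub
      ((integrable_p hF _ 4).const_mul _)) (integrable_a hF u) ?_
    intro x
    have h4 : (u ⬝ᵥ x) ^ 4 = |u ⬝ᵥ x| ^ 4 := by rw [← abs_pow]; exact (abs_of_nonneg (by positivity)).symm
    simp only
    rw [h4, ← sq_abs]
    have h0 := abs_nonneg (u ⬝ᵥ x)
    generalize |u ⬝ᵥ x| = y at h0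
    have : 0 ≤ y * ((y - 2) ^ 2 * (y + 4)) := by positivity
    nlinarith
  rw [integral_sub ((integrable_p hF _ 2).const_mul _) ((integrable_p hF _ 4).const_mul _),
    integral_const_mul, integral_const_mul, second hd hF u hu] at h
  have := fourth hd hF u hu
  linarith

lemma first_upper {d : ℕ} (hd : 3 ≤ d) {F : Measure (Fin d → ℝ)} (hF : IsUniformOnSphere d F)
    (u : Fin d → ℝ) (hu : u ⬝ᵥ u = 1) : ∫ x, |u ⬝ᵥ x| ∂F ≤ 1 := by
  have := hF.1
  have h : ∫ x, |u ⬝ᵥ x| ∂F ≤ ∫ x, (1 / 2 * (u ⬝ᵥ x) ^ 2 + 1 / 2) ∂F := by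
    refine integral_mono (integrable_a hF u)
      (((integrable_p hF _ 2).const_mul _).add (integrable_const _)) ?_
    intro x
    simp only
    rw [← sq_abs]
    nlinarith [sq_nonneg (|u ⬝ᵥ x| - 1)]
  rw [integral_add ((integrable_p hF _ 2).const_mul _) (integrable_const _),
    integral_const_mul, second hd hF u hu] at h
  simp at h
  linarith

lemma pt_bound (a b : ℝ) :
    1 / 2 * (|a| - a * Real.sign b) ≤ |a| * (if Real.sign a = Real.sign b then 0 else 1) ∧
    |a| * (if Real.sign a = Real.sign b then 0 else 1) ≤ |a| - a * Real.sign b := by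
  rcases lt_trichotomy a 0 with h | h | h <;> rcases lt_trichotomy b 0 with h' | h' | h' <;>
    simp only [h, h', Real.sign_of_neg, Real.sign_of_pos, Real.sign_zero, abs_of_neg,
      abs_of_pos, abs_zero] <;> norm_num <;> (try constructor) <;> linarith

lemma eNorm_sq {d : ℕ} (x : Fin d → ℝ) : eNorm x ^ 2 = x ⬝ᵥ x := by
  unfold eNorm
  rw [Real.sq_sqrt (Finset.sum_nonneg fun i _ => sq_nonneg _)]
  simp [dotProduct, sq]

/-- If `Ψ` is uniform on the sphere of radius `√d` in `ℝ^d`, `d ≥ 3`, then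
there is an absolute constant `C > 0` such that for all unit vectors `u, v`,
`C⁻¹ ‖u − v‖² ≤ E[|u'Ψ| · 1(sgn(u'Ψ) ≠ sgn(v'Ψ))] ≤ √2 ‖u − v‖²`. -/
theorem stmt_15 :
    ∃ C : ℝ, 0 < C ∧
      ∀ (d : ℕ), 3 ≤ d →
      ∀ (Ω : Type) (_ : MeasurableSpace Ω) (μ : Measure Ω), IsProbabilityMeasure μ →
      ∀ (Ψ : Ω → Fin d → ℝ), Measurable Ψ →
        IsUniformOnSphere d (μ.map Ψ) →
        ∀ u v : Fin d → ℝ, eNorm u = 1 → eNorm v = 1 →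
          C⁻¹ * eNorm (u - v) ^ 2
              ≤ ∫ ω, |u ⬝ᵥ Ψ ω| *
                  (if Real.sign (u ⬝ᵥ Ψ ω) = Real.sign (v ⬝ᵥ Ψ ω) then 0 else 1) ∂μ ∧
            ∫ ω, |u ⬝ᵥ Ψ ω| *
                  (if Real.sign (u ⬝ᵥ Ψ ω) = Real.sign (v ⬝ᵥ Ψ ω) then 0 else 1) ∂μ
              ≤ Real.sqrt 2 * eNorm (u - v) ^ 2 := by
  refine ⟨8, by norm_num, ?_⟩
  intro d hd Ω _ μ hμ Ψ hΨ hF u v hu hv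
  have hu1 : u ⬝ᵥ u = 1 := by rw [← eNorm_sq, hu]; norm_num
  have hv1 : v ⬝ᵥ v = 1 := by rw [← eNorm_sq, hv]; norm_num
  have hmeas : Measurable (fun x : Fin d → ℝ => |u ⬝ᵥ x| *
      (if Real.sign (u ⬝ᵥ x) = Real.sign (v ⬝ᵥ x) then (0 : ℝ) else 1)) := by
    refine ((meas_dot u).norm).mul (Measurable.ite ?_ measurable_const measurable_const)
    exact measurableSet_eq_fun (meas_sign.comp (meas_dot u)) (meas_sign.comp (meas_dot v))
  rw [← integral_map (f := fun x : Fin d → ℝ => |u ⬝ᵥ x| *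
      (if Real.sign (u ⬝ᵥ x) = Real.sign (v ⬝ᵥ x) then (0 : ℝ) else 1))
      hΨ.aemeasurable hmeas.aestronglyMeasurable]
  generalize μ.map Ψ = F at hF
  have hi1 : Integrable (fun x => |u ⬝ᵥ x| - (u ⬝ᵥ x) * Real.sign (v ⬝ᵥ x)) F :=
    (integrable_a hF u).sub (integrable_s hF u v)
  have hi2 : Integrable (fun x : Fin d → ℝ => |u ⬝ᵥ x| *
      (if Real.sign (u ⬝ᵥ x) = Real.sign (v ⬝ᵥ x) then (0 : ℝ) else 1)) F := by
    refine integrable_of hF _ hmeas (Real.sqrt ((u ⬝ᵥ u) * d)) ?_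
    intro x hx
    refine le_trans ?_ (abs_dot_le u x hx)
    split_ifs <;> simp
  have hval : ∫ x, (|u ⬝ᵥ x| - (u ⬝ᵥ x) * Real.sign (v ⬝ᵥ x)) ∂F =
      (1 - u ⬝ᵥ v) * ∫ x, |u ⬝ᵥ x| ∂F := by
    rw [integral_sub (integrable_a hF u) (integrable_s hF u v), sign_int hF u v hv1,
      same_law hF v u (by rw [hu1, hv1]) (fun t => |t|) (by fun_prop)]
    ring
  have hlow := integral_mono (hi1.const_mul (1 / 2)) hi2 (fun x => (pt_bound (u ⬝ᵥ x) (v ⬝ᵥ x)).1)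
  have hup := integral_mono hi2 hi1 (fun x => (pt_bound (u ⬝ᵥ x) (v ⬝ᵥ x)).2)
  rw [integral_const_mul, hval] at hlow
  rw [hval] at hup
  have hn : eNorm (u - v) ^ 2 = 2 * (1 - u ⬝ᵥ v) := by
    rw [eNorm_sq, sub_dotProduct, dotProduct_sub, dotProduct_sub, hu1, hv1, dotProduct_comm v u]
    ring
  have hn0 : 0 ≤ 1 - u ⬝ᵥ v := by nlinarith [sq_nonneg (eNorm (u - v))]
  have hm1 := first_lower hd hF u hu1
  have hm2 := first_upper hd hF u hu1
  have hs2 : 1 ≤ Real.sqrt 2 := Real.one_le_sqrt.2 (by norm_num)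
  rw [hn]
  constructor
  · refine le_trans ?_ hlow
    nlinarith
  · refine le_trans hup ?_
    nlinarith
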